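/- Let Ω be a bounded open subset of ℝ^N (N ≥ 3) and let p₁, p₂, q : closure(Ω) → ℝ be continuous functions satisfying 1 < p₂(x) < q⁻ ≤ q⁺ < p₁(x) < N for all x ∈ closure(Ω), where q⁻ = min_{closure(Ω)} q and q⁺ = max_{closure(Ω)} q. Fix λ > 0 and, for u : ℝ^N → ℝ of class C¹ with compact support contained in Ω, set T_λ(u) = ∫_Ω (1/p₁(x))|Du|^{p₁(x)} dx + ∫_Ω (1/p₂(x))|Du|^{p₂(x)} dx − λ ∫_Ω (1/q(x))|u|^{q(x)} dx and ‖u‖ = inf { μ > 0 : ∫_Ω (|Du(x)|/μ)^{p₁(x)} dx ≤ 1 }. Then T_λ is coercive: for every M > 0 there exists K > 0 such that every such u with ‖u‖ ≥ K satisfies T_λ(u) ≥ M. -/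

import Mathlib

open MeasureTheory ENNReal

/-- The energy functional
    `T_λ(u) = ∫_Ω (1/p₁(x))|Du|^{p₁(x)} dx + ∫_Ω (1/p₂(x))|Du|^{p₂(x)} dx
       − λ ∫_Ω (1/q(x))|u|^{q(x)} dx`. -/
noncomputable def Tfun (N : ℕ) (Ω : Set (EuclideanSpace ℝ (Fin N)))
    (p₁ p₂ q : EuclideanSpace ℝ (Fin N) → ℝ) (l : ℝ)
    (u : EuclideanSpace ℝ (Fin N) → ℝ) : ℝ :=
  (∫ x in Ω, (1 / p₁ x) * ‖fderiv ℝ u x‖ ^ p₁ x) +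
    (∫ x in Ω, (1 / p₂ x) * ‖fderiv ℝ u x‖ ^ p₂ x) -
    l * ∫ x in Ω, (1 / q x) * |u x| ^ q x

/-- `‖u‖ = inf { μ > 0 : ∫_Ω (|Du(x)|/μ)^{p₁(x)} dx ≤ 1 }`, the Luxemburg norm of
    `|Du|` with respect to the variable exponent `p₁` on `Ω`. -/
noncomputable def luxGrad (N : ℕ) (Ω : Set (EuclideanSpace ℝ (Fin N)))
    (p₁ : EuclideanSpace ℝ (Fin N) → ℝ) (u : EuclideanSpace ℝ (Fin N) → ℝ) : ℝ :=
  sInf {m : ℝ | 0 < m ∧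
    ∫⁻ x in Ω, ENNReal.ofReal ((‖fderiv ℝ u x‖ / m) ^ p₁ x) ≤ 1}

open Set Function

/-!
Let `r = q⁺` and `A = ∫ |Du|^{p₁}`. Since `|u|^q ≤ 1 + |u|^r`, Poincaré's inequality with the
constant exponent `r` bounds the `q`-term of `T_λ` by a multiple of `∫ |Du|^r`, up to a constant;
as `r < min p₁`, the pointwise inequality `t^r ≤ ε t^{p₁} + B_ε` turns this into `ε A + B`. The
`p₁`-term is at least `A / max p₁`, so for small `ε` it absorbs the `q`-term and `T_λ(u) ≥ c A - B`.
Finally `‖u‖ ≤ max 1 A`, so `A` is large when `‖u‖` is.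

Poincaré's inequality follows from the translation estimate
`∫ |u(x + w) - u(x)|^r ≤ |w|^r ∫ |Du|^r`, applied to a `w` longer than the diameter of `Ω`.
-/

section Translation

variable {E F : Type*} [NormedAddCommGroup E] [NormedSpace ℝ E]
  [NormedAddCommGroup F] [NormedSpace ℝ F] {u : E → F} {r : ℝ}

theorem rpow_lintegral_le_lintegral_rpow {α : Type*} [MeasurableSpace α]
    (μ : Measure α) [IsProbabilityMeasure μ] (hr : 1 ≤ r) {f : α → ℝ≥0∞} (hf : AEMeasurable f μ) :
    (∫⁻ x, f x ∂μ) ^ r ≤ ∫⁻ x, f x ^ r ∂μ := by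
  have h := eLpNorm'_le_eLpNorm'_of_exponent_le one_pos hr μ hf.aestronglyMeasurable
  simp only [eLpNorm', enorm_eq_self, ENNReal.rpow_one, div_one, one_div] at h
  exact (ENNReal.le_rpow_inv_iff (by linarith)).1 h

theorem enorm_add_sub_le_lintegral_fderiv (hu : ContDiff ℝ 1 u) (x w : E) :
    ‖u (x + w) - u x‖ₑ ≤ ∫⁻ t in Icc (0 : ℝ) 1, ‖w‖ₑ * ‖fderiv ℝ u (x + t • w)‖ₑ := by
  have hline (t : ℝ) : HasDerivAt (fun t : ℝ ↦ u (x + t • w)) (fderiv ℝ u (x + t • w) w) t := by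
    have hx : HasDerivAt (fun t : ℝ ↦ x + t • w) w t := by
      simpa using ((hasDerivAt_id t).smul_const w).const_add x
    exact ((hu.differentiable one_ne_zero) _).hasFDerivAt.comp_hasDerivAt t hx
  have hsmooth : ContDiff ℝ 1 (fun t : ℝ ↦ u (x + t • w)) := by fun_prop
  calc ‖u (x + w) - u x‖ₑ
      ≤ ∫⁻ t in Icc (0 : ℝ) 1, ‖fderiv ℝ u (x + t • w) w‖ₑ := by
        simpa [fun t ↦ (hline t).deriv] using
          enorm_sub_le_lintegral_deriv_of_contDiffOn_Icc hsmooth.contDiffOn zero_le_one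
    _ ≤ ∫⁻ t in Icc (0 : ℝ) 1, ‖w‖ₑ * ‖fderiv ℝ u (x + t • w)‖ₑ :=
        lintegral_mono fun t ↦ (ContinuousLinearMap.le_opENorm _ _).trans_eq (mul_comm _ _)

theorem lintegral_enorm_add_sub_rpow_le [MeasurableSpace E] [BorelSpace E]
    (μ : Measure E) [SFinite μ] [μ.IsAddRightInvariant] (hu : ContDiff ℝ 1 u) (hr : 1 ≤ r) (w : E) :
    ∫⁻ x, ‖u (x + w) - u x‖ₑ ^ r ∂μ ≤ ‖w‖ₑ ^ r * ∫⁻ x, ‖fderiv ℝ u x‖ₑ ^ r ∂μ := by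
  have hr0 : 0 ≤ r := by linarith
  have hDu : Continuous (fderiv ℝ u) := hu.continuous_fderiv one_ne_zero
  have hmeas : Measurable fun z : E × ℝ ↦ (‖w‖ₑ * ‖fderiv ℝ u (z.1 + z.2 • w)‖ₑ) ^ r :=
    ((hDu.comp (by fun_prop)).enorm.measurable.const_mul _).pow_const r
  have : IsProbabilityMeasure (volume.restrict (Icc (0 : ℝ) 1)) := ⟨by simp⟩
  calc ∫⁻ x, ‖u (x + w) - u x‖ₑ ^ r ∂μ
      ≤ ∫⁻ x, (∫⁻ t in Icc (0 : ℝ) 1, (‖w‖ₑ * ‖fderiv ℝ u (x + t • w)‖ₑ) ^ r) ∂μ :=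
        lintegral_mono fun x ↦
          (ENNReal.rpow_le_rpow (enorm_add_sub_le_lintegral_fderiv hu x w) hr0).trans
            (rpow_lintegral_le_lintegral_rpow _ hr (by fun_prop))
    _ = ∫⁻ t in Icc (0 : ℝ) 1, ∫⁻ x, (‖w‖ₑ * ‖fderiv ℝ u (x + t • w)‖ₑ) ^ r ∂μ :=
        lintegral_lintegral_swap hmeas.aemeasurable
    _ = ∫⁻ _ in Icc (0 : ℝ) 1, ∫⁻ x, (‖w‖ₑ * ‖fderiv ℝ u x‖ₑ) ^ r ∂μ := by
        congr! 2 with t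
        exact lintegral_add_right_eq_self (fun x ↦ (‖w‖ₑ * ‖fderiv ℝ u x‖ₑ) ^ r) (t • w)
    _ = ‖w‖ₑ ^ r * ∫⁻ x, ‖fderiv ℝ u x‖ₑ ^ r ∂μ := by
        simp [ENNReal.mul_rpow_of_nonneg _ _ hr0,
          lintegral_const_mul _ (hDu.enorm.measurable.pow_const r)]

end Translation

section Modular

variable {α F : Type*} [MeasurableSpace α] [NormedAddCommGroup F]
  {μ : Measure α} {p q : α → ℝ} {f : α → F} {r : ℝ}

/-- The modular `ρ_p(f) = ∫ |f|^p dμ` of the variable exponent Lebesgue space `L^{p(·)}(μ)`;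
constant exponents are the case `p = fun _ ↦ r`. It is `0` when the integrand is not integrable. -/
noncomputable def modular (μ : Measure α) (p : α → ℝ) (f : α → F) : ℝ :=
  ∫ x, ‖f x‖ ^ p x ∂μ

theorem modular_nonneg : 0 ≤ modular μ p f :=
  integral_nonneg fun _ ↦ by positivity

theorem modular_restrict_of_support_subset {s : Set α} (hp : ∀ x, p x ≠ 0) (hf : support f ⊆ s) :
    modular (μ.restrict s) p f = modular μ p f :=
  setIntegral_eq_integral_of_forall_compl_eq_zero fun x hx ↦ by
    rw [notMem_support.1 fun h ↦ hx (hf h), norm_zero, Real.zero_rpow (hp x)]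

theorem modular_const_eq_toReal_lintegral (hr : 0 ≤ r) (hf : AEStronglyMeasurable f μ) :
    modular μ (fun _ ↦ r) f = (∫⁻ x, ‖f x‖ₑ ^ r ∂μ).toReal := by
  rw [modular, integral_eq_lintegral_of_nonneg_ae (ae_of_all _ fun _ ↦ by positivity)
    (hf.norm.aemeasurable.pow_const r).aestronglyMeasurable]
  simp only [← ENNReal.ofReal_rpow_of_nonneg (norm_nonneg _) hr, ofReal_norm]

theorem modular_le_mul_integral {P : ℝ} (hp : ∀ᵐ x ∂μ, 0 < p x ∧ p x ≤ P)
    (hint : Integrable (fun x ↦ 1 / p x * ‖f x‖ ^ p x) μ) :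
    modular μ p f ≤ P * ∫ x, 1 / p x * ‖f x‖ ^ p x ∂μ := by
  rw [← integral_const_mul]
  refine integral_mono_of_nonneg (ae_of_all _ fun _ ↦ by positivity) (hint.const_mul P) ?_
  filter_upwards [hp] with x ⟨hx0, hxP⟩
  calc ‖f x‖ ^ p x = p x * (1 / p x * ‖f x‖ ^ p x) := by field_simp
    _ ≤ P * (1 / p x * ‖f x‖ ^ p x) := by gcongr

theorem rpow_le_one_add_rpow {s t : ℝ} (ht : 0 ≤ t) (hs : 0 ≤ s) (hsr : s ≤ r) :
    t ^ s ≤ 1 + t ^ r := by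
  rcases le_total t 1 with h | h
  · linarith [Real.rpow_le_one ht h hs, Real.rpow_nonneg ht r]
  · linarith [Real.rpow_le_rpow_of_exponent_le h hsr]

theorem integral_one_div_mul_rpow_le [IsFiniteMeasure μ] {c : ℝ}
    (hq : ∀ᵐ x ∂μ, 0 < q x ∧ q x ≤ r ∧ 1 / q x ≤ c)
    (hint : Integrable (fun x ↦ ‖f x‖ ^ r) μ) :
    ∫ x, 1 / q x * ‖f x‖ ^ q x ∂μ ≤ c * (μ.real univ + modular μ (fun _ ↦ r) f) := by
  have hsum : ∫ x, c * (1 + ‖f x‖ ^ r) ∂μ = c * (μ.real univ + modular μ (fun _ ↦ r) f) := by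
    simp [integral_const_mul, integral_add (integrable_const 1) hint, modular]
  rw [← hsum]
  refine integral_mono_of_nonneg ?_ (((integrable_const 1).add hint).const_mul c) ?_
  · filter_upwards [hq] with x ⟨hx0, _⟩
    positivity
  · filter_upwards [hq] with x ⟨hx0, hxr, hxc⟩
    have hc : 0 ≤ c := (one_div_pos.2 hx0).le.trans hxc
    exact mul_le_mul hxc (rpow_le_one_add_rpow (norm_nonneg _) hx0.le hxr) (by positivity) hc

theorem exists_rpow_le_mul_rpow_add {a ε : ℝ} (hr : 0 ≤ r) (hra : r < a) (hε : 0 < ε) :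
    ∃ B, ∀ t s : ℝ, 0 ≤ t → a ≤ s → t ^ r ≤ ε * t ^ s + B := by
  -- Beyond the threshold `T`, `t ^ (r - s) ≤ t ^ (r - a) ≤ ε`; below it, `t ^ r ≤ T ^ r`.
  obtain ⟨T, hTε, hT1⟩ := (((tendsto_rpow_neg_atTop (sub_pos.2 hra)).eventually_le_const hε).and
    (Filter.eventually_ge_atTop 1)).exists
  refine ⟨T ^ r, fun t s ht has ↦ ?_⟩
  rcases le_total t T with htT | hTt
  · have : 0 ≤ ε * t ^ s := by positivity
    linarith [Real.rpow_le_rpow ht htT hr]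
  · have ht1 : 1 ≤ t := hT1.trans hTt
    have hsmall : t ^ (r - s) ≤ ε :=
      calc t ^ (r - s) ≤ t ^ (-(a - r)) := Real.rpow_le_rpow_of_exponent_le ht1 (by linarith)
        _ ≤ T ^ (-(a - r)) := Real.rpow_le_rpow_of_nonpos (by linarith) hTt (by linarith)
        _ ≤ ε := hTε
    calc t ^ r = t ^ (r - s) * t ^ s := by rw [← Real.rpow_add (by linarith)]; ring_nf
      _ ≤ ε * t ^ s := by gcongr
      _ ≤ ε * t ^ s + T ^ r := le_add_of_nonneg_right (by positivity)

theorem exists_modular_const_le_mul_modular_add (F : Type*) [NormedAddCommGroup F]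
    (μ : Measure α) [IsFiniteMeasure μ] {a ε : ℝ} (hr : 0 ≤ r) (hra : r < a) (hε : 0 < ε) :
    ∃ B, ∀ (p : α → ℝ) (f : α → F), (∀ᵐ x ∂μ, a ≤ p x) → Integrable (fun x ↦ ‖f x‖ ^ p x) μ →
      modular μ (fun _ ↦ r) f ≤ ε * modular μ p f + B := by
  obtain ⟨B, hB⟩ := exists_rpow_le_mul_rpow_add hr hra hε
  refine ⟨μ.real univ * B, fun p f hap hint ↦ ?_⟩
  calc modular μ (fun _ ↦ r) f ≤ ∫ x, (ε * ‖f x‖ ^ p x + B) ∂μ := by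
        refine integral_mono_of_nonneg (ae_of_all _ fun _ ↦ by positivity)
          ((hint.const_mul ε).add (integrable_const B)) ?_
        filter_upwards [hap] with x hx using hB _ _ (norm_nonneg _) hx
    _ = ε * modular μ p f + μ.real univ * B := by
        simp [integral_add (hint.const_mul ε) (integrable_const B), integral_const_mul, modular]

theorem lintegral_norm_div_rpow_le_one {m : ℝ} (hm : 1 ≤ m) (hp : ∀ᵐ x ∂μ, 1 ≤ p x)
    (hint : Integrable (fun x ↦ ‖f x‖ ^ p x) μ) (hmod : modular μ p f ≤ m) :
    ∫⁻ x, ENNReal.ofReal ((‖f x‖ / m) ^ p x) ∂μ ≤ 1 := by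
  have hm0 : 0 < m := by linarith
  calc ∫⁻ x, ENNReal.ofReal ((‖f x‖ / m) ^ p x) ∂μ
      ≤ ∫⁻ x, ENNReal.ofReal (‖f x‖ ^ p x / m) ∂μ := by
        refine lintegral_mono_ae ?_
        filter_upwards [hp] with x hx
        rw [Real.div_rpow (norm_nonneg _) hm0.le]
        gcongr
        exact Real.self_le_rpow_of_one_le hm hx
    _ = ENNReal.ofReal (modular μ p f / m) := by
        rw [modular, ← integral_div, ofReal_integral_eq_lintegral_ofReal (hint.div_const m)
          (ae_of_all _ fun _ ↦ by positivity)]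
    _ ≤ 1 := ENNReal.ofReal_le_one.2 ((div_le_one hm0).2 hmod)

end Modular

section Poincare

theorem exists_forall_add_notMem_of_isBounded {E : Type*} [NormedAddCommGroup E]
    [NormedSpace ℝ E] [Nontrivial E] {s : Set E} (hs : Bornology.IsBounded s) :
    ∃ w : E, ∀ x ∈ s, x + w ∉ s := by
  obtain ⟨w, hw⟩ := NormedSpace.exists_lt_norm ℝ E (Metric.diam s)
  refine ⟨w, fun x hx hxw ↦ hw.not_ge ?_⟩
  simpa using Metric.dist_le_diam_of_mem hs hxw hx

variable {E F : Type*} [NormedAddCommGroup E] [NormedSpace ℝ E] [MeasurableSpace E] [BorelSpace E]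
  [NormedAddCommGroup F] [NormedSpace ℝ F] {r : ℝ}

theorem lintegral_enorm_rpow_le_lintegral_fderiv (μ : Measure E) [SFinite μ]
    [μ.IsAddRightInvariant] {u : E → F} (hu : ContDiff ℝ 1 u) (hr : 1 ≤ r) {w : E}
    (hw : ∀ x ∈ support u, u (x + w) = 0) :
    ∫⁻ x, ‖u x‖ₑ ^ r ∂μ ≤ ‖w‖ₑ ^ r * ∫⁻ x, ‖fderiv ℝ u x‖ₑ ^ r ∂μ := by
  refine (lintegral_mono fun x ↦ ENNReal.rpow_le_rpow ?_ (by linarith)).trans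
    (lintegral_enorm_add_sub_rpow_le μ hu hr w)
  by_cases hx : u x = 0
  · simp [hx]
  · simp [hw x hx]

theorem exists_modular_le_mul_modular_fderiv [Nontrivial E] [ProperSpace E] (F : Type*)
    [NormedAddCommGroup F] [NormedSpace ℝ F] (μ : Measure E) [IsFiniteMeasureOnCompacts μ]
    [μ.IsAddRightInvariant] {Ω : Set E} (hΩ : Bornology.IsBounded Ω) (hr : 1 ≤ r) :
    ∃ C, 0 ≤ C ∧ ∀ u : E → F, ContDiff ℝ 1 u → tsupport u ⊆ Ω →
      modular (μ.restrict Ω) (fun _ ↦ r) u ≤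
        C * modular (μ.restrict Ω) (fun _ ↦ r) (fderiv ℝ u) := by
  have hr0 : 0 < r := by linarith
  obtain ⟨w, hw⟩ := exists_forall_add_notMem_of_isBounded hΩ
  refine ⟨‖w‖ ^ r, by positivity, fun u hu hsupp ↦ ?_⟩
  have hsub : support u ⊆ Ω := (subset_tsupport u).trans hsupp
  have hDu : Continuous (fderiv ℝ u) := hu.continuous_fderiv one_ne_zero
  have hcs : HasCompactSupport u :=
    Metric.isCompact_of_isClosed_isBounded (isClosed_tsupport u) (hΩ.subset hsupp)
  have hfin : ∫⁻ x, ‖fderiv ℝ u x‖ₑ ^ r ∂μ ≠ ∞ := by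
    have hLp : MemLp (fderiv ℝ u) (ENNReal.ofReal r) μ :=
      hDu.memLp_of_hasCompactSupport (hcs.fderiv ℝ)
    simpa [hr0.le] using (lintegral_rpow_enorm_lt_top_of_eLpNorm_lt_top (by simpa using hr0)
      ENNReal.ofReal_ne_top hLp.2).ne
  have hle := lintegral_enorm_rpow_le_lintegral_fderiv μ hu hr (w := w) fun x hx ↦
    notMem_support.1 fun h ↦ hw x (hsub hx) (hsub h)
  have hconst : ∀ _ : E, r ≠ 0 := fun _ ↦ hr0.ne'
  rw [modular_restrict_of_support_subset hconst hsub,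
    modular_restrict_of_support_subset hconst ((support_fderiv_subset ℝ).trans hsupp),
    modular_const_eq_toReal_lintegral hr0.le hu.continuous.aestronglyMeasurable,
    modular_const_eq_toReal_lintegral hr0.le hDu.aestronglyMeasurable]
  simpa [ENNReal.toReal_mul, ← ENNReal.toReal_rpow] using
    ENNReal.toReal_mono (ENNReal.mul_ne_top (by simp [hr0.le]) hfin) hle

end Poincare

/-- A variable exponent on `K`: a function that is continuous and positive on `K`. In use `K` is the
closure of the domain, so that compactness provides the bounds on the exponent. -/
structure IsVariableExponent {X : Type*} [TopologicalSpace X] (p : X → ℝ) (K : Set X) : Prop where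
  continuousOn : ContinuousOn p K
  pos : ∀ x ∈ K, 0 < p x

namespace IsVariableExponent

variable {X F : Type*} [TopologicalSpace X] [NormedAddCommGroup F] {p : X → ℝ} {K : Set X}

theorem continuousOn_one_div (hp : IsVariableExponent p K) : ContinuousOn (fun x ↦ 1 / p x) K :=
  continuousOn_const.div hp.continuousOn fun x hx ↦ (hp.pos x hx).ne'

theorem continuousOn_norm_rpow (hp : IsVariableExponent p K) {f : X → F} (hf : Continuous f) :
    ContinuousOn (fun x ↦ ‖f x‖ ^ p x) K :=
  hf.norm.continuousOn.rpow hp.continuousOn fun x hx ↦ .inr (hp.pos x hx)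

theorem exists_pos_le (hp : IsVariableExponent p K) (hK : IsCompact K) :
    ∃ P, 0 < P ∧ ∀ x ∈ K, p x ≤ P := by
  obtain ⟨P, hP⟩ := hK.bddAbove_image hp.continuousOn
  exact ⟨max P 1, by positivity, fun x hx ↦ le_max_of_le_left (hP (mem_image_of_mem p hx))⟩

theorem exists_one_div_le (hp : IsVariableExponent p K) (hK : IsCompact K) :
    ∃ c, 0 < c ∧ ∀ x ∈ K, 1 / p x ≤ c :=
  exists_pos_le ⟨hp.continuousOn_one_div, fun x hx ↦ one_div_pos.2 (hp.pos x hx)⟩ hK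

variable [MeasurableSpace X] [OpensMeasurableSpace X] [T2Space X] {μ : Measure X}
  [IsFiniteMeasureOnCompacts μ] {s : Set X} {f : X → F}

theorem integrableOn_norm_rpow (hp : IsVariableExponent p K) (hK : IsCompact K) (hs : s ⊆ K)
    (hf : Continuous f) : IntegrableOn (fun x ↦ ‖f x‖ ^ p x) s μ :=
  ((hp.continuousOn_norm_rpow hf).integrableOn_compact hK).mono_set hs

theorem integrableOn_one_div_mul_norm_rpow (hp : IsVariableExponent p K) (hK : IsCompact K)
    (hs : s ⊆ K) (hf : Continuous f) : IntegrableOn (fun x ↦ 1 / p x * ‖f x‖ ^ p x) s μ :=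
  ((hp.continuousOn_one_div.mul (hp.continuousOn_norm_rpow hf)).integrableOn_compact hK).mono_set hs

end IsVariableExponent

section Absorption

variable {E : Type*} [NormedAddCommGroup E] [NormedSpace ℝ E] [Nontrivial E] [ProperSpace E]
  [MeasurableSpace E] [BorelSpace E] {Ω : Set E} {p q : E → ℝ} {r ε : ℝ}

theorem exists_modular_const_le_mul_modular_fderiv_add (F : Type*) [NormedAddCommGroup F]
    [NormedSpace ℝ F] (μ : Measure E) [IsFiniteMeasureOnCompacts μ] [μ.IsAddRightInvariant]
    (hΩm : MeasurableSet Ω) (hΩb : Bornology.IsBounded Ω) (hp : IsVariableExponent p (closure Ω))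
    (hr : 1 ≤ r) (hrp : ∀ x ∈ closure Ω, r < p x) (hε : 0 < ε) :
    ∃ B, ∀ u : E → F, ContDiff ℝ 1 u → tsupport u ⊆ Ω →
      modular (μ.restrict Ω) (fun _ ↦ r) u ≤ ε * modular (μ.restrict Ω) p (fderiv ℝ u) + B := by
  have : IsFiniteMeasure (μ.restrict Ω) := isFiniteMeasure_restrict.2 hΩb.measure_lt_top.ne
  obtain ⟨a, hra, hap⟩ := hΩb.isCompact_closure.exists_forall_le' hp.continuousOn hrp
  obtain ⟨C, hC, hpoincare⟩ := exists_modular_le_mul_modular_fderiv F μ hΩb hr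
  obtain ⟨B, hB⟩ := exists_modular_const_le_mul_modular_add (E →L[ℝ] F) (μ.restrict Ω)
    (zero_le_one.trans hr) hra (ε := ε / (C + 1)) (by positivity)
  refine ⟨C * B, fun u hu hsupp ↦ ?_⟩
  have hA : 0 ≤ modular (μ.restrict Ω) p (fderiv ℝ u) := modular_nonneg
  have hCε : C * (ε / (C + 1)) ≤ ε := by
    rw [mul_div_assoc', div_le_iff₀ (by positivity)]
    linarith
  have hyoung := hB p (fderiv ℝ u)
    (ae_restrict_of_forall_mem hΩm fun x hx ↦ hap x (subset_closure hx))
    (hp.integrableOn_norm_rpow hΩb.isCompact_closure subset_closure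
      (hu.continuous_fderiv one_ne_zero))
  calc modular (μ.restrict Ω) (fun _ ↦ r) u
      ≤ C * modular (μ.restrict Ω) (fun _ ↦ r) (fderiv ℝ u) := hpoincare u hu hsupp
    _ ≤ C * (ε / (C + 1) * modular (μ.restrict Ω) p (fderiv ℝ u) + B) := by gcongr
    _ = C * (ε / (C + 1)) * modular (μ.restrict Ω) p (fderiv ℝ u) + C * B := by ring
    _ ≤ ε * modular (μ.restrict Ω) p (fderiv ℝ u) + C * B := by gcongr

theorem exists_integral_le_mul_modular_fderiv_add (F : Type*) [NormedAddCommGroup F]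
    [NormedSpace ℝ F] (μ : Measure E) [IsFiniteMeasureOnCompacts μ] [μ.IsAddRightInvariant]
    (hΩm : MeasurableSet Ω) (hΩb : Bornology.IsBounded Ω) (hp : IsVariableExponent p (closure Ω))
    (hq : IsVariableExponent q (closure Ω)) (hr : 1 ≤ r) (hqr : ∀ x ∈ closure Ω, q x ≤ r)
    (hrp : ∀ x ∈ closure Ω, r < p x) (hε : 0 < ε) :
    ∃ B, ∀ u : E → F, ContDiff ℝ 1 u → tsupport u ⊆ Ω →
      ∫ x in Ω, 1 / q x * ‖u x‖ ^ q x ∂μ ≤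
        ε * modular (μ.restrict Ω) p (fderiv ℝ u) + B := by
  have : IsFiniteMeasure (μ.restrict Ω) := isFiniteMeasure_restrict.2 hΩb.measure_lt_top.ne
  obtain ⟨c, hc, hqc⟩ := hq.exists_one_div_le hΩb.isCompact_closure
  obtain ⟨B, hB⟩ := exists_modular_const_le_mul_modular_fderiv_add F μ hΩm hΩb hp hr hrp
    (div_pos hε hc)
  refine ⟨c * ((μ.restrict Ω).real univ + B), fun u hu hsupp ↦ ?_⟩
  have hconst : IsVariableExponent (fun _ ↦ r) (closure Ω) :=
    ⟨continuousOn_const, fun _ _ ↦ by linarith⟩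
  have hq_ae : ∀ᵐ x ∂μ.restrict Ω, 0 < q x ∧ q x ≤ r ∧ 1 / q x ≤ c :=
    ae_restrict_of_forall_mem hΩm fun x hx ↦
      have hx := subset_closure hx
      ⟨hq.pos x hx, hqr x hx, hqc x hx⟩
  calc ∫ x in Ω, 1 / q x * ‖u x‖ ^ q x ∂μ
      ≤ c * ((μ.restrict Ω).real univ + modular (μ.restrict Ω) (fun _ ↦ r) u) :=
        integral_one_div_mul_rpow_le hq_ae
          (hconst.integrableOn_norm_rpow hΩb.isCompact_closure subset_closure hu.continuous)
    _ ≤ c * ((μ.restrict Ω).real univ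
          + (ε / c * modular (μ.restrict Ω) p (fderiv ℝ u) + B)) := by
        gcongr
        exact hB u hu hsupp
    _ = ε * modular (μ.restrict Ω) p (fderiv ℝ u) + c * ((μ.restrict Ω).real univ + B) := by
        field_simp
        ring

end Absorption

section Coercivity

variable {N : ℕ} {Ω : Set (EuclideanSpace ℝ (Fin N))} {p₁ p₂ q : EuclideanSpace ℝ (Fin N) → ℝ}

theorem luxGrad_le_max_one_modular {u : EuclideanSpace ℝ (Fin N) → ℝ} (hΩm : MeasurableSet Ω)
    (hp : ∀ x ∈ Ω, 1 ≤ p₁ x) (hint : IntegrableOn (fun x ↦ ‖fderiv ℝ u x‖ ^ p₁ x) Ω) :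
    luxGrad N Ω p₁ u ≤ max 1 (modular (volume.restrict Ω) p₁ (fderiv ℝ u)) :=
  csInf_le ⟨0, fun _ hm ↦ hm.1.le⟩
    ⟨by positivity, lintegral_norm_div_rpow_le_one (le_max_left _ _)
      (ae_restrict_of_forall_mem hΩm hp) hint (le_max_right _ _)⟩

theorem exists_mul_modular_sub_le_Tfun [NeZero N] (hΩm : MeasurableSet Ω)
    (hΩb : Bornology.IsBounded Ω) (hp₁ : IsVariableExponent p₁ (closure Ω))
    (hp₂ : ∀ x ∈ Ω, 0 ≤ p₂ x) (hq : IsVariableExponent q (closure Ω))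
    {r : ℝ} (hr : 1 ≤ r) (hqr : ∀ x ∈ closure Ω, q x ≤ r) (hrp : ∀ x ∈ closure Ω, r < p₁ x)
    (l : ℝ) :
    ∃ c, 0 < c ∧ ∃ B, ∀ u : EuclideanSpace ℝ (Fin N) → ℝ, ContDiff ℝ 1 u → tsupport u ⊆ Ω →
      c * modular (volume.restrict Ω) p₁ (fderiv ℝ u) - B ≤ Tfun N Ω p₁ p₂ q l u := by
  have hK : IsCompact (closure Ω) := hΩb.isCompact_closure
  obtain ⟨P, hP, hpP⟩ := hp₁.exists_pos_le hK
  obtain ⟨B, hB⟩ := exists_integral_le_mul_modular_fderiv_add ℝ volume hΩm hΩb hp₁ hq hr hqr hrp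
    (ε := 1 / (2 * P * (|l| + 1))) (by positivity)
  refine ⟨1 / (2 * P), by positivity, |l| * B, fun u hu hsupp ↦ ?_⟩
  set A := modular (volume.restrict Ω) p₁ (fderiv ℝ u)
  have hDu : Continuous (fderiv ℝ u) := hu.continuous_fderiv one_ne_zero
  have hA : 0 ≤ A := modular_nonneg
  have hterm₁ : A / P ≤ ∫ x in Ω, 1 / p₁ x * ‖fderiv ℝ u x‖ ^ p₁ x := by
    rw [div_le_iff₀' hP]
    exact modular_le_mul_integral
      (ae_restrict_of_forall_mem hΩm fun x hx ↦
        ⟨hp₁.pos x (subset_closure hx), hpP x (subset_closure hx)⟩)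
      (hp₁.integrableOn_one_div_mul_norm_rpow hK subset_closure hDu)
  have hterm₂ : 0 ≤ ∫ x in Ω, 1 / p₂ x * ‖fderiv ℝ u x‖ ^ p₂ x :=
    setIntegral_nonneg hΩm fun x hx ↦
      mul_nonneg (one_div_nonneg.2 (hp₂ x hx)) (by positivity)
  have hterm₃ : l * ∫ x in Ω, 1 / q x * |u x| ^ q x ≤ A / (2 * P) + |l| * B :=
    calc l * ∫ x in Ω, 1 / q x * |u x| ^ q x
        ≤ |l| * ∫ x in Ω, 1 / q x * |u x| ^ q x := by
          refine mul_le_mul_of_nonneg_right (le_abs_self l) (setIntegral_nonneg hΩm fun x hx ↦ ?_)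
          have := hq.pos x (subset_closure hx)
          positivity
      _ ≤ |l| * (1 / (2 * P * (|l| + 1)) * A + B) := by gcongr; exact hB u hu hsupp
      _ = |l| / (|l| + 1) * (A / (2 * P)) + |l| * B := by field_simp
      _ ≤ A / (2 * P) + |l| * B := by
          gcongr
          exact mul_le_of_le_one_left (by positivity)
            (div_le_one_of_le₀ (by linarith) (by positivity))
  calc 1 / (2 * P) * A - |l| * B = A / P + 0 - (A / (2 * P) + |l| * B) := by field_simp; ring
    _ ≤ Tfun N Ω p₁ p₂ q l u := by unfold Tfun; gcongr

theorem stmt16_general [NeZero N] (hΩm : MeasurableSet Ω)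
    (hΩb : Bornology.IsBounded Ω) (hp₁ : IsVariableExponent p₁ (closure Ω))
    (hp₂ : IsVariableExponent p₂ (closure Ω)) (hq : IsVariableExponent q (closure Ω))
    {r : ℝ} (hr : 1 ≤ r) (hqr : ∀ x ∈ closure Ω, q x ≤ r) (hrp : ∀ x ∈ closure Ω, r < p₁ x)
    (l M : ℝ) :
    ∃ K, 0 < K ∧ ∀ u : EuclideanSpace ℝ (Fin N) → ℝ, ContDiff ℝ 1 u → tsupport u ⊆ Ω →
      K ≤ luxGrad N Ω p₁ u → M ≤ Tfun N Ω p₁ p₂ q l u := by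
  obtain ⟨c, hc, B, hT⟩ := exists_mul_modular_sub_le_Tfun hΩm hΩb hp₁
    (fun x hx ↦ (hp₂.pos x (subset_closure hx)).le) hq hr hqr hrp l
  refine ⟨max 2 ((M + B) / c), by positivity, fun u hu hsupp hKu ↦ ?_⟩
  set A := modular (volume.restrict Ω) p₁ (fderiv ℝ u)
  have hlux : luxGrad N Ω p₁ u ≤ max 1 A :=
    luxGrad_le_max_one_modular hΩm (fun x hx ↦ hr.trans (hrp x (subset_closure hx)).le)
      (hp₁.integrableOn_norm_rpow hΩb.isCompact_closure subset_closure
        (hu.continuous_fderiv one_ne_zero))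
  have hA : (M + B) / c ≤ A := by
    obtain ⟨h2, hMB⟩ := max_le_iff.1 (hKu.trans hlux)
    rcases le_max_iff.1 h2 with h | h
    · norm_num at h
    · exact hMB.trans (max_le (by linarith) le_rfl)
  calc M ≤ c * A - B := by linarith [(div_le_iff₀' hc).1 hA]
    _ ≤ Tfun N Ω p₁ p₂ q l u := hT u hu hsupp

end Coercivity

/-- Under `1 < p₂(x) < q⁻ ≤ q⁺ < p₁(x) < N` on `closure Ω`, for every fixed `λ > 0`
    the functional `T_λ` is coercive: for every `M > 0` there is `K > 0` such that
    every `C¹` function `u` with compact support in `Ω` and `‖u‖ ≥ K` satisfies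
    `T_λ(u) ≥ M`. -/
theorem stmt16 (N : ℕ) (hN : 3 ≤ N) (Ω : Set (EuclideanSpace ℝ (Fin N)))
    (hΩo : IsOpen Ω) (hΩb : Bornology.IsBounded Ω)
    (p₁ p₂ q : EuclideanSpace ℝ (Fin N) → ℝ)
    (hp₁ : ContinuousOn p₁ (closure Ω)) (hp₂ : ContinuousOn p₂ (closure Ω))
    (hq : ContinuousOn q (closure Ω))
    (qm qp : ℝ) (hqm : IsLeast (q '' closure Ω) qm)
    (hqp : IsGreatest (q '' closure Ω) qp)
    (hcond : ∀ x ∈ closure Ω, 1 < p₂ x ∧ p₂ x < qm ∧ qp < p₁ x ∧ p₁ x < N)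
    (l : ℝ) (hl : 0 < l) :
    ∀ M : ℝ, 0 < M → ∃ K : ℝ, 0 < K ∧
      ∀ u : EuclideanSpace ℝ (Fin N) → ℝ,
        ContDiff ℝ 1 u → HasCompactSupport u → tsupport u ⊆ Ω →
        K ≤ luxGrad N Ω p₁ u → M ≤ Tfun N Ω p₁ p₂ q l u := by
  intro M _
  have : NeZero N := ⟨by lia⟩
  have hqmem (x) (hx : x ∈ closure Ω) : qm ≤ q x ∧ q x ≤ qp :=
    ⟨hqm.2 (mem_image_of_mem q hx), hqp.2 (mem_image_of_mem q hx)⟩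
  have hqm1 : 1 < qm := by
    obtain ⟨x, hx, -⟩ := hqm.1
    linarith [hcond x hx]
  obtain ⟨K, hK, hT⟩ := stmt16_general hΩo.measurableSet hΩb
    ⟨hp₁, fun x hx ↦ by linarith [hcond x hx, hqmem x hx]⟩
    ⟨hp₂, fun x hx ↦ by linarith [hcond x hx]⟩ ⟨hq, fun x hx ↦ by linarith [hqmem x hx]⟩
    (hqm1.le.trans (hqp.2 hqm.1)) (fun x hx ↦ (hqmem x hx).2) (fun x hx ↦ (hcond x hx).2.2.1) l M
  exact ⟨K, hK, fun u hu _ ↦ hT u hu⟩
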